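/- Suppose c := cd(a,M) = ara(a,M) > 0. Then the following are equivalent: (i) for every generating set {b_1,...,b_t} of a, the canonical map λ^i_M : H^i(b_1,...,b_t; M) → H^i_a(M) from Koszul cohomology to local cohomology is surjective for all 0 ≤ i ≤ c-1; (ii) there exists an f-generating set {a_1,...,a_s} of a with respect to M such that the canonical map λ^i_M : H^i(a_1,...,a_s; M) → H^i_a(M) is surjective for all 0 ≤ i ≤ c-1. -/

import Mathlib

/-!
Formalization of a statement from "A theory of relative generalized Cohen-Macaulay modules"
by Divaani-Aazar, Ghanbari Doust, Tousi and Zakeri.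

Throughout, `R` is a commutative Noetherian ring and `M` a finitely generated `R`-module.
Conventions used below:
* `locH I i M` is the local cohomology module `H^i_I(M)` (Mathlib's `localCohomology`).
* Conditions `cd(I,M) = c`, `ara(I,M) = n`, `f_I(M) = f`, `grade(I,M) = r` are expressed by
  the predicates `IsCd`, `IsAra`, `IsFinDim`, `IsGrade`.
* Sequences are given as functions `Fin r → R`; `pSpan M x i = ⟨x_0,…,x_{i-1}⟩M`.
* Koszul (co)homology is defined via the explicit (co)chain complex on the `p`-element
  subsets of `{0,…,n-1}`, and the canonical map `λ^i` into local cohomology is the structure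
  map (at exponent 1) into the direct limit of Koszul cohomologies of powers of the sequence,
  which is the realization of `H^i_{⟨x⟩}(M)` used in the paper (2.1(iv)).
-/

open CategoryTheory

noncomputable section

variable {R : Type} [CommRing R]

/-! ### Sequences: prefix spans, weak sequences, filter regular sequences, d-sequences -/

/-- `pSpan M x i` is the submodule `⟨x_0, …, x_{i-1}⟩M` of `M`. -/
def pSpan (M : Type) [AddCommGroup M] [Module R M] {r : ℕ} (x : Fin r → R) (i : Fin r) :
    Submodule R M :=
  Ideal.span (x '' {j | j < i}) • (⊤ : Submodule R M)

/-- `x_1, …, x_r` is an `I`-weak sequence on `M`: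
`(⟨x_1,…,x_{i-1}⟩M :_M x_i) ⊆ (⟨x_1,…,x_{i-1}⟩M :_M I)` for all `i`. -/
def IsWeakSeq (I : Ideal R) (M : Type) [AddCommGroup M] [Module R M] {r : ℕ}
    (x : Fin r → R) : Prop :=
  ∀ i : Fin r, ∀ m : M, x i • m ∈ pSpan M x i → ∀ a ∈ I, a • m ∈ pSpan M x i

/-- `x_1, …, x_r` is an `I`-filter regular sequence on `M`:
`(⟨x_1,…,x_{i-1}⟩M :_M x_i) ⊆ ⋃ₜ (⟨x_1,…,x_{i-1}⟩M :_M I^t)` for all `i`. -/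
def IsFilterRegSeq (I : Ideal R) (M : Type) [AddCommGroup M] [Module R M] {r : ℕ}
    (x : Fin r → R) : Prop :=
  ∀ i : Fin r, ∀ m : M, x i • m ∈ pSpan M x i →
    ∃ t : ℕ, ∀ a ∈ I ^ t, a • m ∈ pSpan M x i

/-- An unconditioned `I`-filter regular sequence: filter regular in any order. -/
def IsUncondFilterRegSeq (I : Ideal R) (M : Type) [AddCommGroup M] [Module R M] {r : ℕ}
    (x : Fin r → R) : Prop :=
  ∀ σ : Equiv.Perm (Fin r), IsFilterRegSeq I M (x ∘ σ)

/-- An unconditioned `I`-weak sequence: all positive powers, in any order, form an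
`I`-weak sequence. -/
def IsUncondWeakSeq (I : Ideal R) (M : Type) [AddCommGroup M] [Module R M] {r : ℕ}
    (x : Fin r → R) : Prop :=
  ∀ σ : Equiv.Perm (Fin r), ∀ α : Fin r → ℕ, (∀ k, 0 < α k) →
    IsWeakSeq I M fun k => x (σ k) ^ α k

/-- `x_1, …, x_r` is a d-sequence on `M`:
`(⟨x_1,…,x_{i-1}⟩M :_M x_i x_j) = (⟨x_1,…,x_{i-1}⟩M :_M x_j)` for all `i ≤ j`. -/
def IsDSeq (M : Type) [AddCommGroup M] [Module R M] {r : ℕ} (x : Fin r → R) : Prop :=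
  ∀ i j : Fin r, i ≤ j → ∀ m : M,
    ((x i * x j) • m ∈ pSpan M x i ↔ x j • m ∈ pSpan M x i)

/-- An u.s.d-sequence on `M`: all positive powers, in any order, form a d-sequence. -/
def IsUSDSeq (M : Type) [AddCommGroup M] [Module R M] {r : ℕ} (x : Fin r → R) : Prop :=
  ∀ σ : Equiv.Perm (Fin r), ∀ α : Fin r → ℕ, (∀ k, 0 < α k) →
    IsDSeq M fun k => x (σ k) ^ α k

/-! ### Local cohomology, cohomological dimension, arithmetic rank -/

/-- The `i`-th local cohomology module `H^i_I(M)`. -/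
abbrev locH (I : Ideal R) (i : ℕ) (M : Type) [AddCommGroup M] [Module R M] : ModuleCat R :=
  (localCohomology I i).obj (ModuleCat.of R M)

/-- `cd(I, M) = c`: the cohomological dimension of `I` on `M` equals `c`, i.e.
`H^c_I(M) ≠ 0` and `H^i_I(M) = 0` for all `i > c`. -/
def IsCd (I : Ideal R) (M : Type) [AddCommGroup M] [Module R M] (c : ℕ) : Prop :=
  Nontrivial (locH I c M) ∧ ∀ i : ℕ, c < i → Subsingleton (locH I i M)

/-- `f_I(M) = f`: the `I`-finiteness dimension of `M` equals `f`, i.e. `f` is the least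
integer such that `H^f_I(M)` is not finitely generated. -/
def IsFinDim (I : Ideal R) (M : Type) [AddCommGroup M] [Module R M] (f : ℕ) : Prop :=
  (∀ i : ℕ, i < f → Module.Finite R (locH I i M)) ∧ ¬ Module.Finite R (locH I f M)

/-- `M` is `I`-relative generalized Cohen-Macaulay: `cd(I,M) ≤ 0` or `cd(I,M) = f_I(M)`. -/
def IsRelGCM (I : Ideal R) (M : Type) [AddCommGroup M] [Module R M] : Prop :=
  (∀ i : ℕ, 0 < i → Subsingleton (locH I i M)) ∨
    ∃ c : ℕ, IsCd I M c ∧ IsFinDim I M c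

/-- `ara(I, M) = n`: the arithmetic rank of `I` with respect to `M` equals `n`, i.e. `n` is the
least integer such that there are `x_1, …, x_n ∈ R` with
`Rad(⟨x_1,…,x_n⟩ + Ann M) = Rad(I + Ann M)`. -/
def IsAra (I : Ideal R) (M : Type) [AddCommGroup M] [Module R M] (n : ℕ) : Prop :=
  IsLeast {k : ℕ | ∃ x : Fin k → R,
    (Ideal.span (Set.range x) + Module.annihilator R M).radical
      = (I + Module.annihilator R M).radical} n

/-- `x_1, …, x_c` is an `I`-relative system of parameters of `M` (where `c = cd(I,M)`):
the `x_i` lie in `I` and `Rad(⟨x_1,…,x_c⟩ + Ann M) = Rad(I + Ann M)`. -/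
def IsRsop (I : Ideal R) (M : Type) [AddCommGroup M] [Module R M] {c : ℕ}
    (x : Fin c → R) : Prop :=
  (∀ j, x j ∈ I) ∧
    (Ideal.span (Set.range x) + Module.annihilator R M).radical
      = (I + Module.annihilator R M).radical

/-! ### Koszul cochain complexes, Koszul cohomology, and the canonical maps
`λ^i_M : H^i(x; M) → H^i_{⟨x⟩}(M)` -/

/-- The degree `p` term of the Koszul cochain complex of `M` on `n` elements:
functions on the `p`-element subsets of `{1, …, n}` with values in `M`
(i.e. `Hom(Λ^p R^n, M)`). -/
abbrev KM (M : Type) (n p : ℕ) : Type := {s : Finset (Fin n) // s.card = p} → M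

section Koszul

variable {M : Type} [AddCommGroup M] [Module R M]

/-- The Koszul cochain differential `K^p(x; M) → K^{p+1}(x; M)`. -/
def kd {n : ℕ} (x : Fin n → R) (p : ℕ) : KM M n p →ₗ[R] KM M n (p + 1) where
  toFun f t := ∑ j ∈ t.1.attach,
    ((-1 : R) ^ (t.1.filter (fun a => a < j.1)).card * x j.1) •
      f ⟨t.1.erase j.1, by rw [Finset.card_erase_of_mem j.2, t.2]; omega⟩
  map_add' f g := by
    funext t
    simp [smul_add, Finset.sum_add_distrib]
  map_smul' r f := by
    funext t
    simp [Finset.smul_sum, smul_comm r]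

/-- The transition map of Koszul cochain complexes raising the exponent of the defining
sequence by `e`: in degree `p` it multiplies the component at a subset `s`
by `(∏_{j ∈ s} x_j)^e`. -/
def kt {n : ℕ} (x : Fin n → R) (e p : ℕ) : KM M n p →ₗ[R] KM M n p where
  toFun f s := (∏ j ∈ s.1, x j) ^ e • f s
  map_add' f g := by funext s; simp [smul_add]
  map_smul' r f := by funext s; simp [smul_comm r]

/-- The transition maps are maps of cochain complexes
`K^•(x^u; M) → K^•(x^{u+e}; M)`. -/
theorem kt_kd {n : ℕ} (x : Fin n → R) (u e p : ℕ) :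
    (kt (M := M) x e (p + 1)).comp (kd (fun j => x j ^ u) p)
      = (kd (fun j => x j ^ (u + e)) p).comp (kt x e p) := by
  apply LinearMap.ext; intro f
  funext t
  simp only [LinearMap.comp_apply, kd, kt, LinearMap.coe_mk, AddHom.coe_mk]
  rw [Finset.smul_sum]
  refine Finset.sum_congr rfl fun j _ => ?_
  rw [smul_smul, smul_smul]
  congr 1
  rw [← Finset.mul_prod_erase t.1 x j.2]
  ring

end Koszul

/-- The `R`-module of Koszul `p`-cocycles of `M` with respect to `y`. -/
def kZ {n : ℕ} (y : Fin n → R) (M : Type) [AddCommGroup M] [Module R M] (p : ℕ) :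
    Submodule R (KM M n p) :=
  LinearMap.ker (kd y p)

/-- The `R`-module of Koszul `p`-coboundaries of `M` with respect to `y`. -/
def kB {n : ℕ} (y : Fin n → R) (M : Type) [AddCommGroup M] [Module R M] :
    (p : ℕ) → Submodule R (KM M n p)
  | 0 => ⊥
  | (q + 1) => LinearMap.range (kd y q)

/-- The `p`-th Koszul cohomology module `H^p(y; M)`: cocycles modulo coboundaries. -/
abbrev Hk {n : ℕ} (y : Fin n → R) (M : Type) [AddCommGroup M] [Module R M] (p : ℕ) :=
  kZ y M p ⧸ ((kB y M p ⊓ kZ y M p).comap (kZ y M p).subtype)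

section KoszulMaps

variable {M : Type} [AddCommGroup M] [Module R M]

theorem kt_mem_kZ {n : ℕ} (x : Fin n → R) {u v : ℕ} (h : u ≤ v) (p : ℕ) :
    ∀ f ∈ kZ (fun j => x j ^ (u + 1)) M p,
      kt x (v - u) p f ∈ kZ (fun j => x j ^ (v + 1)) M p := by
  intro f hf
  have he : u + 1 + (v - u) = v + 1 := by omega
  have hc := congrArg (fun φ => φ f) (kt_kd (M := M) x (u + 1) (v - u) p)
  simp only [LinearMap.comp_apply] at hc
  rw [he] at hc
  simp only [kZ, LinearMap.mem_ker] at hf ⊢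
  rw [← hc, hf, map_zero]

theorem kt_mem_kB {n : ℕ} (x : Fin n → R) {u v : ℕ} (h : u ≤ v) (p : ℕ) :
    ∀ f ∈ kB (fun j => x j ^ (u + 1)) M p,
      kt x (v - u) p f ∈ kB (fun j => x j ^ (v + 1)) M p := by
  intro f hf
  cases p with
  | zero =>
      simp only [kB, Submodule.mem_bot] at hf ⊢
      rw [hf, map_zero]
  | succ q =>
      simp only [kB, LinearMap.mem_range] at hf ⊢
      obtain ⟨g, hg⟩ := hf
      refine ⟨kt x (v - u) q g, ?_⟩
      have he : u + 1 + (v - u) = v + 1 := by omega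
      have hc := congrArg (fun φ => φ g) (kt_kd (M := M) x (u + 1) (v - u) q)
      simp only [LinearMap.comp_apply] at hc
      rw [he] at hc
      rw [← hc, hg]

end KoszulMaps

/-- The map `H^p(x^{u+1}; M) → H^p(x^{v+1}; M)`, `u ≤ v`, induced by the transition map of
Koszul cochain complexes. -/
def ktH {n : ℕ} (x : Fin n → R) (M : Type) [AddCommGroup M] [Module R M] (p : ℕ)
    (u v : ℕ) (h : u ≤ v) :
    Hk (fun j => x j ^ (u + 1)) M p →ₗ[R] Hk (fun j => x j ^ (v + 1)) M p :=
  Submodule.mapQ _ _ ((kt x (v - u) p).restrict (kt_mem_kZ x h p)) (by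
    rintro ⟨f, hfZ⟩ hfN
    simp only [Submodule.mem_comap, Submodule.mem_inf, Submodule.coe_subtype] at hfN ⊢
    exact ⟨kt_mem_kB x h p f hfN.1, kt_mem_kZ x h p f hfN.2⟩)

/-- `H^p_{⟨x⟩}(M)`, realized as the direct limit of the Koszul cohomology modules
`H^p(x^{u+1}; M)` along the transition maps (cf. 2.1(iv) in the paper). -/
abbrev KLoc {n : ℕ} (x : Fin n → R) (M : Type) [AddCommGroup M] [Module R M] (p : ℕ) :=
  Module.DirectLimit (fun u : ℕ => Hk (fun j => x j ^ (u + 1)) M p)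
    (fun u v h => ktH x M p u v h)

/-- Transport of Koszul cohomology along an equality of defining sequences. -/
def castHk {n : ℕ} (M : Type) [AddCommGroup M] [Module R M] (p : ℕ) {y z : Fin n → R}
    (h : y = z) : Hk y M p →ₗ[R] Hk z M p :=
  Eq.rec (motive := fun w _ => Hk y M p →ₗ[R] Hk w M p) LinearMap.id h

/-- The canonical map `λ^p_M : H^p(x; M) → H^p_{⟨x⟩}(M)`, i.e. the structure map of the
direct limit at exponent `1`. -/
def klambda {n : ℕ} (x : Fin n → R) (M : Type) [AddCommGroup M] [Module R M] (p : ℕ) :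
    Hk x M p →ₗ[R] KLoc x M p :=
  (Module.DirectLimit.of R ℕ (fun u : ℕ => Hk (fun j => x j ^ (u + 1)) M p)
      (fun u v h => ktH x M p u v h) 0).comp
    (castHk M p (funext fun j => by rw [zero_add, pow_one] :
      x = fun j => x j ^ (0 + 1)))

/-- Surjectivity of the canonical map `λ^p_M : H^p(x; M) → H^p_{⟨x⟩}(M)`. -/
def LambdaSurj {n : ℕ} (x : Fin n → R) (M : Type) [AddCommGroup M] [Module R M] (p : ℕ) :
    Prop :=
  Function.Surjective (klambda x M p)


section FGen

open scoped Pointwise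

/-! ### Existence of f-generating sets -/

/-- `x` is `I`-filter regular on `M / L`. -/
def FReg (I : Ideal R) {M : Type} [AddCommGroup M] [Module R M] (L : Submodule R M) (x : R) :
    Prop :=
  ∀ m : M, x • m ∈ L → ∃ t : ℕ, ∀ a ∈ I ^ t, a • m ∈ L

/-- The elements killed modulo `L` by a power of `I` can be treated uniformly on
finitely generated ideals. -/
theorem freg_swap [IsNoetherianRing R] (I : Ideal R) {M : Type} [AddCommGroup M] [Module R M]
    (L : Submodule R M) (x y : R) (hx : FReg I L x)
    (hy : FReg I (L ⊔ x • (⊤ : Submodule R M)) y) :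
    FReg I (L ⊔ y • (⊤ : Submodule R M)) x := by
  intro m hm
  obtain ⟨l, hl, q, hq, hlq⟩ := Submodule.mem_sup.1 hm
  obtain ⟨m', -, rfl⟩ := (Submodule.mem_smul_pointwise_iff_exists _ _ _).1 hq
  have h1 : y • m' ∈ L ⊔ x • (⊤ : Submodule R M) := by
    have : y • m' = -l + x • m := by rw [← hlq]; abel
    rw [this]
    exact Submodule.add_mem_sup (L.neg_mem hl)
      ((Submodule.mem_smul_pointwise_iff_exists _ _ _).2 ⟨m, trivial, rfl⟩)
  obtain ⟨t, ht⟩ := hy m' h1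
  have key : ∀ α ∈ I ^ t, ∃ s : ℕ, ∀ β ∈ I ^ s, (β * α) • m ∈ L ⊔ y • (⊤ : Submodule R M) := by
    intro α hα
    obtain ⟨l', hl', q', hq', hlq'⟩ := Submodule.mem_sup.1 (ht α hα)
    obtain ⟨m'', -, rfl⟩ := (Submodule.mem_smul_pointwise_iff_exists _ _ _).1 hq'
    have h2 : x • (α • m - y • m'') ∈ L := by
      have : x • (α • m - y • m'') = α • l + y • l' := by
        have e1 : x • α • m = α • l + y • (α • m') := by
          rw [smul_comm, ← hlq, smul_add, smul_comm α y]
        rw [smul_sub, e1, ← hlq', smul_add, smul_comm x y]; abel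
      rw [this]
      exact L.add_mem (L.smul_mem _ hl) (L.smul_mem _ hl')
    obtain ⟨s, hs⟩ := hx _ h2
    refine ⟨s, fun β hβ => ?_⟩
    have h3 := hs β hβ
    have : (β * α) • m = β • (α • m - y • m'') + y • (β • m'') := by
      rw [smul_sub, smul_comm y β, mul_smul]; abel
    rw [this]
    exact Submodule.add_mem_sup h3
      ((Submodule.mem_smul_pointwise_iff_exists _ _ _).2 ⟨_, trivial, rfl⟩)
  let N := L ⊔ y • (⊤ : Submodule R M)
  let A : Ideal R := N.comap (LinearMap.toSpanSingleton R M m)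
  have hA : ∀ r, r ∈ A ↔ r • m ∈ N := fun r => by
    simp only [A, Submodule.mem_comap, LinearMap.toSpanSingleton_apply]
  have hrad : I ≤ A.radical := by
    intro i hi
    obtain ⟨s, hs⟩ := key (i ^ t) (Ideal.pow_mem_pow hi t)
    refine ⟨s + t, (hA _).2 ?_⟩
    rw [pow_add]
    exact hs _ (Ideal.pow_mem_pow hi s)
  obtain ⟨n, hn⟩ := Ideal.exists_pow_le_of_le_radical_of_fg hrad (IsNoetherian.noetherian I)
  exact ⟨n, fun a ha => (hA a).1 (hn ha)⟩

theorem freg_of_avoid [IsNoetherianRing R] (I : Ideal R) {M : Type} [AddCommGroup M]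
    [Module R M] [Module.Finite R M] (L : Submodule R M) (x : R)
    (h : ∀ P ∈ associatedPrimes R (M ⧸ L), x ∈ P → I ≤ P) : FReg I L x := by
  intro m hm
  let A : Ideal R := L.comap (LinearMap.toSpanSingleton R M m)
  have hA : ∀ r, r ∈ A ↔ r • m ∈ L := fun r => by
    simp only [A, Submodule.mem_comap, LinearMap.toSpanSingleton_apply]
  let S : Submodule R (M ⧸ L) := Submodule.span R {L.mkQ m}
  have hann : Module.annihilator R S = A := by
    ext r
    rw [hA]
    change r ∈ Submodule.annihilator S ↔ _
    rw [Submodule.mem_annihilator_span_singleton, ← map_smul, Submodule.mkQ_apply,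
      Submodule.Quotient.mk_eq_zero]
  have hrad : I ≤ A.radical := by
    rw [← Ideal.sInf_minimalPrimes]
    refine le_sInf fun P hP => ?_
    refine h P ?_ (hP.1.2 ((hA x).2 hm))
    rw [← hann] at hP
    have := Module.associatedPrimes.minimalPrimes_annihilator_subset_associatedPrimes R S hP
    exact associatedPrimes.subset_of_injective (f := S.subtype) S.injective_subtype this
  obtain ⟨n, hn⟩ := Ideal.exists_pow_le_of_le_radical_of_fg hrad (IsNoetherian.noetherian I)
  exact ⟨n, fun a ha => (hA a).1 (hn ha)⟩

theorem exists_good_element [IsNoetherianRing R] (I J : Ideal R) (M : Type) [AddCommGroup M]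
    [Module R M] [Module.Finite R M] (hJ : ¬ I ≤ J) {ι : Type} [Finite ι]
    (L : ι → Submodule R M) : ∃ x ∈ I, x ∉ J ∧ ∀ i, FReg I (L i) x := by
  let Ps : Set (Ideal R) := ⋃ i, {P ∈ associatedPrimes R (M ⧸ L i) | ¬ I ≤ P}
  have hfin : Ps.Finite :=
    Set.finite_iUnion fun i => (associatedPrimes.finite R (M ⧸ L i)).subset fun P hP => hP.1
  have hnot : ¬ ((I : Set R) ⊆ ⋃ P ∈ insert J Ps, ((id P : Ideal R) : Set R)) := by
    rw [Ideal.subset_union_prime_finite (hfin.insert J) J J]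
    · rintro ⟨P, hP, hle⟩
      rcases hP with rfl | hP
      · exact hJ hle
      · obtain ⟨i, hi⟩ := Set.mem_iUnion.1 hP
        exact hi.2 hle
    · intro P hP hne _
      rcases hP with rfl | hP
      · exact absurd rfl hne
      · obtain ⟨i, hi⟩ := Set.mem_iUnion.1 hP
        exact hi.1.isPrime
  obtain ⟨x, hxI, hx⟩ := Set.not_subset.1 hnot
  simp only [Set.mem_iUnion, not_exists, id] at hx
  refine ⟨x, hxI, hx J (Set.mem_insert _ _), fun i => freg_of_avoid I _ x fun P hP hxP => ?_⟩
  by_contra hIP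
  exact hx P (Set.mem_insert_of_mem _ (Set.mem_iUnion.2 ⟨i, hP, hIP⟩)) hxP

/-- `A` is a set of elements each of which is filter regular modulo any subset of the others. -/
def GoodSet (I : Ideal R) (M : Type) [AddCommGroup M] [Module R M] (A : Finset R) : Prop :=
  ∀ T : Set R, T ⊆ A → ∀ x ∈ A, x ∉ T →
    FReg I (Ideal.span T • (⊤ : Submodule R M)) x

theorem span_insert_smul_top (M : Type) [AddCommGroup M] [Module R M] (x : R) (T : Set R) :
    Ideal.span (insert x T) • (⊤ : Submodule R M)
      = Ideal.span T • (⊤ : Submodule R M) ⊔ x • (⊤ : Submodule R M) := by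
  rw [Ideal.span_insert, Submodule.sup_smul, sup_comm, Submodule.ideal_span_singleton_smul]

theorem exists_goodSet [IsNoetherianRing R] (I : Ideal R) (M : Type) [AddCommGroup M]
    [Module R M] [Module.Finite R M] (J : Ideal R) :
    ∀ A : Finset R, Ideal.span (A : Set R) = J → J ≤ I → GoodSet I M A →
      ∃ B : Finset R, Ideal.span (B : Set R) = I ∧ GoodSet I M B := by
  classical
  induction J using WellFoundedGT.induction with
  | ind J ih =>
    intro A hA hJI hgood
    by_cases hIJ : I ≤ J
    · exact ⟨A, hA.trans (le_antisymm hJI hIJ), hgood⟩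
    obtain ⟨x, hxI, hxJ, hx⟩ := exists_good_element I J M hIJ
      (fun T : {T : Finset R // T ∈ A.powerset} =>
        Ideal.span (T.1 : Set R) • (⊤ : Submodule R M))
    have hx' : ∀ T : Set R, T ⊆ A → FReg I (Ideal.span T • (⊤ : Submodule R M)) x := by
      intro T hT
      have hTf : T.Finite := A.finite_toSet.subset hT
      have := hx ⟨hTf.toFinset, by
        rw [Finset.mem_powerset]; intro a ha; exact hT (hTf.mem_toFinset.1 ha)⟩
      simpa using this
    have hxA : x ∉ A := fun h => hxJ (hA ▸ Ideal.subset_span h)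
    have hspan : Ideal.span ((insert x A : Finset R) : Set R) = Ideal.span {x} ⊔ J := by
      rw [Finset.coe_insert, Ideal.span_insert, hA]
    refine ih (Ideal.span {x} ⊔ J) ?_ (insert x A) hspan ?_ ?_
    · refine lt_of_le_of_ne le_sup_right fun h => hxJ ?_
      rw [h]
      exact Ideal.mem_sup_left (Ideal.mem_span_singleton_self x)
    · exact sup_le ((Ideal.span_singleton_le_iff_mem _).2 hxI) hJI
    · intro T hT y hy hyT
      rw [Finset.mem_insert] at hy
      rw [Finset.coe_insert] at hT
      by_cases hxT : x ∈ T
      · have hyx : y ≠ x := fun h => hyT (h ▸ hxT)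
        have hyA : y ∈ A := hy.resolve_left hyx
        have hT' : T \ {x} ⊆ A := fun a ha => (hT ha.1).resolve_left ha.2
        have hTe : T = insert x (T \ {x}) := by
          rw [Set.insert_sdiff_singleton, Set.insert_eq_of_mem hxT]
        rw [hTe, span_insert_smul_top]
        refine freg_swap I _ y x (hgood _ hT' y hyA fun h => hyT h.1) ?_
        rw [← span_insert_smul_top]
        exact hx' _ (Set.insert_subset hyA hT')
      · have hT' : T ⊆ A := fun a ha =>
          (hT ha).resolve_left fun h => hxT (h ▸ ha)
        rcases hy with rfl | hy
        · exact hx' T hT'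
        · exact hgood T hT' y hy hyT

theorem exists_fgenerating [IsNoetherianRing R] (I : Ideal R) (M : Type) [AddCommGroup M]
    [Module R M] [Module.Finite R M] :
    ∃ (s : ℕ) (a : Fin s → R), Ideal.span (Set.range a) = I ∧ IsUncondFilterRegSeq I M a := by
  obtain ⟨B, hB, hg⟩ := exists_goodSet I M ⊥ ∅ (by simp) bot_le
    (fun T _ x hx => by simp at hx)
  let e := B.equivFin.symm
  refine ⟨B.card, fun i => (e i : R), ?_, ?_⟩
  · rw [← hB]
    congr 1
    ext x
    constructor
    · rintro ⟨i, rfl⟩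
      exact (e i).2
    · intro hx
      exact ⟨e.symm ⟨x, hx⟩, by simp⟩
  · intro σ i m hm
    refine hg _ ?_ _ (e (σ i)).2 ?_ m hm
    · rintro _ ⟨j, -, rfl⟩
      exact (e (σ j)).2
    · rintro ⟨j, hj, hij⟩
      have : j = i := σ.injective (e.injective (Subtype.ext hij))
      exact (lt_irrefl i) (this ▸ hj)

end FGen

/-! ### Exterior multiplication and contraction operators on an ambient index set -/

section Ambient

variable {ι : Type} [LinearOrder ι] {M : Type} [AddCommGroup M] [Module R M]

/-- The sign `(-1)^{#{a ∈ s : a < k}}`. -/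
def sg (R : Type) [CommRing R] (k : ι) (s : Finset ι) : R := (-1 : R) ^ (s.filter (· < k)).card

theorem sg_mul_self (k : ι) (s : Finset ι) : sg R k s * sg R k s = 1 := by
  rw [sg, ← pow_add, ← two_mul, pow_mul]; simp

theorem sg_insert (k j : ι) (s : Finset ι) (h : j ∉ s) :
    sg R k (insert j s) = (if j < k then -1 else 1) * sg R k s := by
  unfold sg
  rw [Finset.filter_insert]
  split_ifs with hjk
  · rw [Finset.card_insert_of_notMem (by simp [h]), pow_succ]; ring
  · rw [one_mul]

theorem sg_erase (k j : ι) (s : Finset ι) (h : j ∈ s) :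
    sg R k (s.erase j) = (if j < k then -1 else 1) * sg R k s := by
  conv_rhs => rw [← Finset.insert_erase h]
  rw [sg_insert k j _ (Finset.notMem_erase j s), ← mul_assoc]
  split_ifs <;> simp

/-- Exterior multiplication. -/
def wOp (k : ι) : (Finset ι → M) →ₗ[R] (Finset ι → M) where
  toFun f s := if k ∈ s then sg R k s • f (s.erase k) else 0
  map_add' f g := by funext s; by_cases h : k ∈ s <;> simp [h]
  map_smul' r f := by funext s; by_cases h : k ∈ s <;> simp [h, smul_comm r]

/-- Contraction. -/
def cOp (k : ι) : (Finset ι → M) →ₗ[R] (Finset ι → M) where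
  toFun f s := if k ∈ s then 0 else sg R k s • f (insert k s)
  map_add' f g := by funext s; by_cases h : k ∈ s <;> simp [h]
  map_smul' r f := by funext s; by_cases h : k ∈ s <;> simp [h, smul_comm r]

theorem wOp_apply (k : ι) (f : Finset ι → M) (s : Finset ι) :
    wOp (R := R) k f s = if k ∈ s then sg R k s • f (s.erase k) else 0 := rfl

theorem cOp_apply (k : ι) (f : Finset ι → M) (s : Finset ι) :
    cOp (R := R) k f s = if k ∈ s then 0 else sg R k s • f (insert k s) := rfl

theorem wOp_wOp_self (k : ι) (f : Finset ι → M) : wOp (R := R) k (wOp (R := R) k f) = 0 := by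
  funext s
  by_cases h : k ∈ s <;> simp [wOp_apply, h]

theorem wOp_wOp (j k : ι) (f : Finset ι → M) :
    wOp (R := R) j (wOp (R := R) k f) = - wOp (R := R) k (wOp (R := R) j f) := by
  rcases eq_or_ne j k with rfl | hne
  · simp [wOp_wOp_self]
  funext s
  by_cases hj : j ∈ s <;> by_cases hk : k ∈ s <;>
    simp only [wOp_apply, Pi.neg_apply, hj, hk, Finset.mem_erase, ne_eq, hne, hne.symm,
      not_false_eq_true, and_self, and_false, if_true, if_false, smul_zero, neg_zero]
  rw [smul_smul, smul_smul, Finset.erase_right_comm, sg_erase k j s hj, sg_erase j k s hk,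
    ← neg_smul]
  congr 1
  rcases lt_or_gt_of_ne hne with h | h
  · rw [if_pos h, if_neg h.not_gt]; ring
  · rw [if_pos h, if_neg h.not_gt]; ring

theorem cOp_wOp_self (k : ι) (f : Finset ι → M) :
    cOp (R := R) k (wOp (R := R) k f) + wOp (R := R) k (cOp (R := R) k f) = f := by
  funext s
  by_cases h : k ∈ s
  · simp only [Pi.add_apply, cOp_apply, wOp_apply, h, if_true, Finset.notMem_erase, if_false,
      Finset.insert_erase h, sg_erase k k s h, lt_irrefl, one_mul, smul_smul, sg_mul_self,
      one_smul, zero_add]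
  · simp only [Pi.add_apply, cOp_apply, wOp_apply, h, if_false, Finset.mem_insert_self, if_true,
      Finset.erase_insert h, sg_insert k k s h, lt_irrefl, one_mul, smul_smul, sg_mul_self,
      one_smul, add_zero]

theorem cOp_wOp (j k : ι) (hne : j ≠ k) (f : Finset ι → M) :
    cOp (R := R) j (wOp (R := R) k f) = - wOp (R := R) k (cOp (R := R) j f) := by
  funext s
  by_cases hj : j ∈ s <;> by_cases hk : k ∈ s <;>
    simp only [wOp_apply, cOp_apply, Pi.neg_apply, hj, hk, Finset.mem_erase, Finset.mem_insert,
      ne_eq, hne, hne.symm, or_false, or_true,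
      not_false_eq_true, and_self, and_false, if_true, if_false, smul_zero, neg_zero]
  rw [smul_smul, smul_smul, ← neg_smul, sg_insert k j s hj, sg_erase j k s hk,
    Finset.erase_insert_of_ne hne]
  congr 1
  rcases lt_or_gt_of_ne hne with h | h
  · rw [if_pos h, if_neg h.not_gt]; ring
  · rw [if_pos h, if_neg h.not_gt]; ring

/-- The Koszul differential of the family `y` over the index set `S`. -/
def dOp (S : Finset ι) (y : ι → R) : (Finset ι → M) →ₗ[R] (Finset ι → M) :=
  ∑ k ∈ S, y k • wOp k

theorem dOp_apply (S : Finset ι) (y : ι → R) (f : Finset ι → M) :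
    dOp S y f = ∑ k ∈ S, y k • wOp (R := R) k f := by
  simp [dOp, LinearMap.sum_apply]

theorem dOp_insert (S : Finset ι) (j : ι) (hj : j ∉ S) (y : ι → R) (f : Finset ι → M) :
    dOp (insert j S) y f = dOp S y f + y j • wOp (R := R) j f := by
  rw [dOp_apply, dOp_apply, Finset.sum_insert hj, add_comm]

theorem dOp_wOp (S : Finset ι) (y : ι → R) (j : ι) (f : Finset ι → M) :
    dOp S y (wOp (R := R) j f) = - wOp (R := R) j (dOp S y f) := by
  rw [dOp_apply, dOp_apply, map_sum, ← Finset.sum_neg_distrib]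
  refine Finset.sum_congr rfl fun k _ => ?_
  rw [map_smul, wOp_wOp k j, smul_neg]

theorem cOp_dOp_of_notMem (S : Finset ι) (y : ι → R) (j : ι) (hj : j ∉ S) (f : Finset ι → M) :
    cOp (R := R) j (dOp S y f) = - dOp S y (cOp (R := R) j f) := by
  rw [dOp_apply, dOp_apply, map_sum, ← Finset.sum_neg_distrib]
  refine Finset.sum_congr rfl fun k hk => ?_
  rw [map_smul, cOp_wOp j k (fun h => hj (h ▸ hk)), smul_neg]

theorem cOp_dOp (S : Finset ι) (y : ι → R) (j : ι) (hj : j ∈ S) (f : Finset ι → M) :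
    cOp (R := R) j (dOp S y f) + dOp S y (cOp (R := R) j f) = y j • f := by
  have h1 := cOp_dOp_of_notMem (S.erase j) y j (Finset.notMem_erase j S) f
  rw [← Finset.insert_erase hj, dOp_insert _ _ (Finset.notMem_erase j S),
    dOp_insert _ _ (Finset.notMem_erase j S), map_add, h1, map_smul]
  conv_rhs => rw [← cOp_wOp_self (R := R) j f]
  rw [smul_add]; abel

theorem dOp_sum_cOp (S : Finset ι) (y r : ι → R) (f : Finset ι → M) (hf : dOp S y f = 0) :
    dOp S y (∑ k ∈ S, r k • cOp (R := R) k f) = (∑ k ∈ S, r k * y k) • f := by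
  rw [map_sum, Finset.sum_smul]
  refine Finset.sum_congr rfl fun k hk => ?_
  have := cOp_dOp S y k hk f
  rw [hf, map_zero, zero_add] at this
  rw [map_smul, this, smul_smul]

/-- The transition maps. -/
def tOp (x : ι → R) (e : ℕ) : (Finset ι → M) →ₗ[R] (Finset ι → M) where
  toFun f s := (∏ j ∈ s, x j) ^ e • f s
  map_add' f g := by funext s; simp [smul_add]
  map_smul' r f := by funext s; simp [smul_comm r]

theorem tOp_apply (x : ι → R) (e : ℕ) (f : Finset ι → M) (s : Finset ι) :
    tOp x e f s = (∏ j ∈ s, x j) ^ e • f s := rfl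

theorem tOp_tOp (x : ι → R) (e e' : ℕ) (f : Finset ι → M) :
    tOp x e (tOp x e' f) = tOp x (e + e') f := by
  funext s
  simp only [tOp_apply, smul_smul, pow_add]

theorem tOp_wOp (x : ι → R) (e : ℕ) (k : ι) (f : Finset ι → M) :
    tOp x e (wOp (R := R) k f) = x k ^ e • wOp (R := R) k (tOp x e f) := by
  funext s
  by_cases h : k ∈ s
  · simp only [tOp_apply, wOp_apply, h, if_true, Pi.smul_apply, smul_smul]
    rw [← Finset.mul_prod_erase s x h]
    congr 1
    ring
  · simp [tOp_apply, wOp_apply, h]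

theorem tOp_cOp (x : ι → R) (e : ℕ) (k : ι) (f : Finset ι → M) :
    cOp (R := R) k (tOp x e f) = x k ^ e • tOp x e (cOp (R := R) k f) := by
  funext s
  by_cases h : k ∈ s
  · simp [tOp_apply, cOp_apply, h]
  · simp only [tOp_apply, cOp_apply, h, if_false, Pi.smul_apply, smul_smul]
    rw [Finset.prod_insert h]
    congr 1
    ring

theorem tOp_dOp (S : Finset ι) (x : ι → R) (e u : ℕ) (f : Finset ι → M) :
    tOp x e (dOp S (fun j => x j ^ u) f) = dOp S (fun j => x j ^ (u + e)) (tOp x e f) := by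
  rw [dOp_apply, dOp_apply, map_sum]
  refine Finset.sum_congr rfl fun k _ => ?_
  rw [map_smul, tOp_wOp, smul_smul, pow_add]

/-- The projection onto functions supported on sets not containing `j`. -/
def rOp (j : ι) (f : Finset ι → M) : Finset ι → M := fun s => if j ∈ s then 0 else f s

theorem rOp_eq (j : ι) (f : Finset ι → M) : rOp j f + wOp (R := R) j (cOp (R := R) j f) = f := by
  funext s
  by_cases h : j ∈ s
  · simp only [rOp, Pi.add_apply, cOp_apply, wOp_apply, h, if_true, Finset.notMem_erase, if_false,
      Finset.insert_erase h, sg_erase j j s h, lt_irrefl, one_mul, smul_smul, sg_mul_self,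
      one_smul, zero_add]
  · simp [rOp, wOp_apply, h]

theorem rOp_add (j : ι) (f g : Finset ι → M) : rOp j (f + g) = rOp j f + rOp j g := by
  funext s; by_cases h : j ∈ s <;> simp [rOp, h]

theorem rOp_sub (j : ι) (f g : Finset ι → M) : rOp j (f - g) = rOp j f - rOp j g := by
  funext s; by_cases h : j ∈ s <;> simp [rOp, h]

theorem rOp_zero (j : ι) : rOp j (0 : Finset ι → M) = 0 := by
  funext s; simp [rOp]

theorem rOp_wOp (j : ι) (f : Finset ι → M) : rOp j (wOp (R := R) j f) = 0 := by
  funext s; by_cases h : j ∈ s <;> simp [rOp, wOp_apply, h]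

theorem rOp_tOp (x : ι → R) (e : ℕ) (j : ι) (f : Finset ι → M) :
    rOp j (tOp x e f) = tOp x e (rOp j f) := by
  funext s; by_cases h : j ∈ s <;> simp [rOp, tOp_apply, h]

theorem rOp_dOp (S : Finset ι) (y : ι → R) (j : ι) (hj : j ∉ S) (f : Finset ι → M) :
    rOp j (dOp (insert j S) y f) = dOp S y (rOp j f) := by
  funext s
  simp only [dOp_apply, rOp, Finset.sum_insert hj, Finset.sum_apply, Pi.add_apply, Pi.smul_apply,
    wOp_apply, Finset.mem_erase]
  by_cases h : j ∈ s
  · rw [if_pos h]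
    symm
    refine Finset.sum_eq_zero fun k hk => ?_
    have hjk : j ≠ k := fun e => hj (e ▸ hk)
    simp [h, hjk]
  · simp [h]

/-- `f` is homogeneous of degree `p` and supported on subsets of `S`. -/
def HSupp (S : Finset ι) (p : ℕ) (f : Finset ι → M) : Prop :=
  ∀ s, f s ≠ 0 → s ⊆ S ∧ s.card = p

/-- The elementwise version of surjectivity of `λ^p` in the ambient complex. -/
def TS (M : Type) [AddCommGroup M] [Module R M] (x : ι → R) (S : Finset ι) (p : ℕ) : Prop :=
  ∀ (u : ℕ) (z : Finset ι → M), HSupp S p z → dOp S (fun j => x j ^ (u + 1)) z = 0 →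
    ∃ (v : ℕ) (z' g : Finset ι → M), u ≤ v ∧ dOp S x z' = 0 ∧
      tOp x (v - u) z - tOp x v z' = dOp S (fun j => x j ^ (v + 1)) g

theorem exists_combination (y : ι → R) (S : Finset ι) (a : R) (h : a ∈ Ideal.span (y '' S)) :
    ∃ r : ι → R, ∑ k ∈ S, r k * y k = a := by
  obtain ⟨c, hc⟩ := (Submodule.mem_span_image_finset_iff_exists_fun R).1 h
  refine ⟨fun k => if hk : k ∈ S then c ⟨k, hk⟩ else 0, ?_⟩
  rw [← hc, ← Finset.sum_coe_sort]
  refine Finset.sum_congr rfl fun k _ => ?_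
  simp

theorem dOp_dOp (S : Finset ι) (y : ι → R) (f : Finset ι → M) : dOp S y (dOp S y f) = 0 := by
  induction S using Finset.induction_on with
  | empty => simp [dOp]
  | insert j S hj ih =>
    rw [dOp_insert _ _ hj, dOp_insert _ _ hj, map_add, map_add, ih, map_smul, map_smul, dOp_wOp,
      wOp_wOp_self]
    simp

theorem exists_pow_combination (x : ι → R) (S : Finset ι) (j : ι)
    (hj : x j ∈ Ideal.span (x '' S)) (u n : ℕ) :
    ∃ w, n ≤ w ∧ ∃ r : ι → R, ∑ k ∈ S, r k * x k ^ u = x j ^ w := by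
  have h1 : (Ideal.span (x '' S)) ≤ (Ideal.span ((fun k => x k ^ u) '' S)).radical := by
    rw [Ideal.span_le]
    rintro _ ⟨k, hk, rfl⟩
    exact ⟨u, Ideal.subset_span ⟨k, hk, rfl⟩⟩
  obtain ⟨w, hw⟩ := h1 hj
  refine ⟨n + w, Nat.le_add_right _ _, ?_⟩
  have h2 : x j ^ (n + w) ∈ Ideal.span ((fun k => x k ^ u) '' S) := by
    rw [pow_add]; exact Ideal.mul_mem_left _ _ hw
  exact exists_combination _ S _ h2

theorem TS_of_insert (x : ι → R) (S : Finset ι) (j : ι) (hjS : j ∉ S)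
    (hj : x j ∈ Ideal.span (x '' S)) (p : ℕ) (h : TS M x (insert j S) p) : TS M x S p := by
  intro u z hz hdz
  obtain ⟨w', hw', r, hr⟩ := exists_pow_combination x S j hj (u + 1) (u + 1)
  obtain ⟨w, rfl⟩ : ∃ w, w' = w + 1 := ⟨w' - 1, by omega⟩
  have huw : u ≤ w := by omega
  set q := ∑ k ∈ S, r k • cOp (R := R) k z with hq
  have hdq := dOp_sum_cOp S (fun j => x j ^ (u + 1)) r z hdz
  rw [← hq, hr] at hdq
  set Z := tOp x (w - u) z + wOp (R := R) j (tOp x (w - u) q) with hZ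
  have hrz : rOp j z = z := by
    funext s
    by_cases hs : j ∈ s
    · by_contra hne
      refine hjS ((hz s fun h0 => hne ?_).1 hs)
      simp [rOp, h0]
    · simp [rOp, hs]
  have hexp : u + 1 + (w - u) = w + 1 := by omega
  have hT : ∀ f : Finset ι → M, dOp S (fun j => x j ^ (w + 1)) (tOp x (w - u) f)
      = tOp x (w - u) (dOp S (fun j => x j ^ (u + 1)) f) := fun f => by
    rw [tOp_dOp, hexp]
  have hZsupp : HSupp (insert j S) p Z := by
    intro s hs
    have : tOp x (w - u) z s ≠ 0 ∨ wOp (R := R) j (tOp x (w - u) q) s ≠ 0 := by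
      by_contra hcon
      push Not at hcon
      apply hs
      rw [hZ, Pi.add_apply, hcon.1, hcon.2, add_zero]
    rcases this with h1 | h1
    · have : z s ≠ 0 := fun h0 => h1 (by rw [tOp_apply, h0, smul_zero])
      exact ⟨(hz s this).1.trans (Finset.subset_insert _ _), (hz s this).2⟩
    · have hjs : j ∈ s := by
        by_contra hjs
        exact h1 (by rw [wOp_apply, if_neg hjs])
      have h2 : q (s.erase j) ≠ 0 := fun h0 => h1 (by
        rw [wOp_apply, if_pos hjs, tOp_apply, h0, smul_zero, smul_zero])
      rw [hq, Finset.sum_apply] at h2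
      obtain ⟨k, hk, h3⟩ := Finset.exists_ne_zero_of_sum_ne_zero h2
      have hks : k ∉ s.erase j := fun hks => h3 (by
        rw [Pi.smul_apply, cOp_apply, if_pos hks, smul_zero])
      have h4 : z (insert k (s.erase j)) ≠ 0 := fun h0 => h3 (by
        rw [Pi.smul_apply, cOp_apply, if_neg hks, h0, smul_zero, smul_zero])
      obtain ⟨h5, h6⟩ := hz _ h4
      constructor
      · rw [← Finset.insert_erase hjs]
        exact Finset.insert_subset_insert _ ((Finset.subset_insert _ _).trans h5)
      · rw [Finset.card_insert_of_notMem hks, Finset.card_erase_of_mem hjs] at h6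
        have := Finset.card_pos.2 ⟨j, hjs⟩
        omega
  have hdZ : dOp (insert j S) (fun j => x j ^ (w + 1)) Z = 0 := by
    rw [dOp_insert _ _ hjS, hZ, map_add, map_add, dOp_wOp, hT, hT, hdz, hdq, map_zero, map_smul,
      map_smul, wOp_wOp_self]
    simp
  obtain ⟨v, Z', G, hwv, hZ', hG⟩ := h w Z hZsupp hdZ
  refine ⟨v, rOp j Z', rOp j G, huw.trans hwv, ?_, ?_⟩
  · rw [← rOp_dOp S x j hjS, hZ', rOp_zero]
  · rw [← rOp_dOp S _ j hjS, ← hG, rOp_sub, rOp_tOp, rOp_tOp, hZ, rOp_add, rOp_wOp, rOp_tOp, hrz,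
      add_zero, tOp_tOp]
    congr 3
    omega

theorem TS_insert (x : ι → R) (S : Finset ι) (j : ι) (hjS : j ∉ S)
    (hj : x j ∈ Ideal.span (x '' S)) (p : ℕ) (h : TS M x S p) : TS M x (insert j S) p := by
  intro u z hz hdz
  have hrz : HSupp S p (rOp j z) := by
    intro s hs
    have hjs : j ∉ s := fun hjs => hs (by simp [rOp, hjs])
    have h1 : z s ≠ 0 := by simpa [rOp, hjs] using hs
    exact ⟨(Finset.subset_insert_iff_of_notMem hjs).1 (hz s h1).1, (hz s h1).2⟩
  obtain ⟨v, z', g, huv, hz', hg⟩ := h u (rOp j z) hrz (by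
    rw [← rOp_dOp S _ j hjS, hdz, rOp_zero])
  obtain ⟨r, hr⟩ : ∃ r : ι → R, ∑ k ∈ S, r k * x k = x j :=
    exists_combination _ S _ hj
  set q := ∑ k ∈ S, r k • cOp (R := R) k z' with hq
  have hdq := dOp_sum_cOp S x r z' hz'
  rw [← hq, hr] at hdq
  set Z' := z' + wOp (R := R) j q with hZ'
  have hdZ' : dOp (insert j S) x Z' = 0 := by
    rw [dOp_insert _ _ hjS, hZ', map_add, map_add, dOp_wOp, hz', hdq, wOp_wOp_self, map_smul]
    simp
  set y : ι → R := fun j => x j ^ (v + 1) with hy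
  have hexp : u + 1 + (v - u) = v + 1 := by omega
  set E := tOp x (v - u) z - tOp x v Z' - dOp (insert j S) y g with hE
  have hdE : dOp (insert j S) y E = 0 := by
    have e1 : dOp (insert j S) y (tOp x (v - u) z) = 0 := by
      have := tOp_dOp (insert j S) x (v - u) (u + 1) z
      rw [hdz, map_zero, hexp] at this
      exact this.symm
    have e2 : dOp (insert j S) y (tOp x v Z') = 0 := by
      have := tOp_dOp (insert j S) x v 1 Z'
      simp only [pow_one] at this
      rw [hdZ', map_zero, add_comm 1 v] at this
      exact this.symm
    rw [hE, map_sub, map_sub, dOp_dOp, e1, e2]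
    simp
  have hrE : rOp j E = 0 := by
    have := congrArg (rOp j) hg
    have hrr : rOp j (rOp j z) = rOp j z := by
      funext s; by_cases hs : j ∈ s <;> simp [rOp, hs]
    have hdd : rOp j (dOp S y g) = dOp S y (rOp j g) := by
      rw [← rOp_dOp S y j hjS, dOp_insert _ _ hjS, rOp_add]
      have : y j • wOp (R := R) j g = wOp (R := R) j (y j • g) := by rw [map_smul]
      rw [this, rOp_wOp, add_zero]
    rw [rOp_sub, rOp_tOp, rOp_tOp, hrr, hdd] at this
    rw [hE, rOp_sub, rOp_sub, rOp_tOp, rOp_tOp, hZ', rOp_add, rOp_wOp, add_zero, this,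
      rOp_dOp S y j hjS, sub_self]
  set m := cOp (R := R) j E with hm
  have hEm : E = wOp (R := R) j m := by
    have := rOp_eq (R := R) j E
    rw [hrE, zero_add] at this
    exact this.symm
  have hdm : dOp S y m = 0 := by
    have h1 := cOp_dOp (insert j S) y j (Finset.mem_insert_self _ _) E
    rw [hdE, map_zero, zero_add, ← hm, dOp_insert _ _ hjS, ← hEm] at h1
    simpa using h1
  obtain ⟨e, -, r', hr'⟩ := exists_pow_combination x S j hj (v + 1) 0
  set m' := ∑ k ∈ S, r' k • cOp (R := R) k m with hm'
  have hdm' := dOp_sum_cOp S y r' m hdm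
  rw [← hm', hr'] at hdm'
  have hTE : tOp x e E
      = dOp (insert j S) (fun j => x j ^ (v + 1 + e)) (- wOp (R := R) j (tOp x e m')) := by
    rw [map_neg, dOp_insert _ _ hjS, wOp_wOp_self, smul_zero, add_zero, dOp_wOp, neg_neg,
      ← tOp_dOp, hdm', hEm, tOp_wOp, map_smul, map_smul]
  refine ⟨v + e, Z', tOp x e g - wOp (R := R) j (tOp x e m'), by omega, hdZ', ?_⟩
  have h3 : tOp x (v - u) z - tOp x v Z' = E + dOp (insert j S) y g := by rw [hE]; abel
  have h4 := congrArg (tOp x e) h3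
  rw [map_sub, map_add (tOp x e) E, tOp_tOp, tOp_tOp, hTE, tOp_dOp, ← map_add] at h4
  have e1 : e + (v - u) = v + e - u := by omega
  have e2 : v + 1 + e = v + e + 1 := by omega
  rw [e1, e2, add_comm e v] at h4
  rw [h4]
  congr 1
  abel

theorem TS_union (x : ι → R) (S T : Finset ι) (p : ℕ)
    (hT : ∀ j ∈ T, x j ∈ Ideal.span (x '' S)) : TS M x (T ∪ S) p ↔ TS M x S p := by
  induction T using Finset.induction_on with
  | empty => simp
  | insert j T hjT ih =>
    rw [← ih fun k hk => hT k (Finset.mem_insert_of_mem hk), Finset.insert_union]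
    by_cases hj : j ∈ T ∪ S
    · rw [Finset.insert_eq_of_mem hj]
    · have hmem : x j ∈ Ideal.span (x '' (T ∪ S : Finset ι)) :=
        Ideal.span_mono (Set.image_mono (by simp)) (hT j (Finset.mem_insert_self _ _))
      exact ⟨TS_of_insert x _ j hj hmem p, TS_insert x _ j hj hmem p⟩

end Ambient

/-! ### Translation of surjectivity of `λ` -/

section Translate

variable {M : Type} [AddCommGroup M] [Module R M]

theorem castHk_mk {n : ℕ} (p : ℕ) {y z : Fin n → R} (h : y = z) (f : KM M n p)
    (hf : f ∈ kZ y M p) :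
    castHk M p h (Submodule.Quotient.mk ⟨f, hf⟩) = Submodule.Quotient.mk ⟨f, h ▸ hf⟩ := by
  subst h
  rfl

theorem ktH_mk {n : ℕ} (x : Fin n → R) (p u v : ℕ) (h : u ≤ v) (f : KM M n p)
    (hf : f ∈ kZ (fun j => x j ^ (u + 1)) M p) :
    ktH x M p u v h (Submodule.Quotient.mk ⟨f, hf⟩)
      = Submodule.Quotient.mk ⟨kt x (v - u) p f, kt_mem_kZ x h p f hf⟩ := rfl

theorem kt_kt {n : ℕ} (x : Fin n → R) (e e' p : ℕ) (f : KM M n p) :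
    kt x e p (kt x e' p f) = kt x (e + e') p f := by
  funext s
  simp only [kt, LinearMap.coe_mk, AddHom.coe_mk, smul_smul, pow_add]

theorem kt_zero {n : ℕ} (x : Fin n → R) (p : ℕ) (f : KM M n p) : kt x 0 p f = f := by
  funext s
  simp [kt]

instance ktH_directed {n : ℕ} (x : Fin n → R) (p : ℕ) :
    DirectedSystem (fun u : ℕ => Hk (fun j => x j ^ (u + 1)) M p)
      (fun u v h => ktH x M p u v h) where
  map_self u z := by
    induction z using Submodule.Quotient.induction_on with
    | H z =>
      obtain ⟨f, hf⟩ := z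
      rw [ktH_mk]
      congr 2
      rw [Nat.sub_self, kt_zero]
  map_map u v w huv hvw z := by
    induction z using Submodule.Quotient.induction_on with
    | H z =>
      obtain ⟨f, hf⟩ := z
      rw [ktH_mk, ktH_mk, ktH_mk]
      congr 2
      rw [kt_kt]
      congr 2
      omega

theorem lambdaSurj_iff {n : ℕ} (x : Fin n → R) (p : ℕ) :
    LambdaSurj x M p ↔ ∀ (u : ℕ) (z : KM M n p), z ∈ kZ (fun j => x j ^ (u + 1)) M p →
      ∃ (v : ℕ) (z' : KM M n p), u ≤ v ∧ z' ∈ kZ x M p ∧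
        kt x (v - u) p z - kt x v p z' ∈ kB (fun j => x j ^ (v + 1)) M p := by
  have hx0 : x = fun j => x j ^ (0 + 1) := funext fun j => by rw [zero_add, pow_one]
  constructor
  · intro h u z hz
    obtain ⟨q, hq⟩ := h (Module.DirectLimit.of R ℕ
      (fun u : ℕ => Hk (fun j => x j ^ (u + 1)) M p)
      (fun u v h => ktH x M p u v h) u (Submodule.Quotient.mk ⟨z, hz⟩))
    induction q using Submodule.Quotient.induction_on with
    | H q =>
      obtain ⟨z', hz'⟩ := q
      rw [klambda, LinearMap.comp_apply, castHk_mk,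
        ← Module.DirectLimit.of_f (hij := Nat.zero_le u)] at hq
      obtain ⟨v, huv, hv⟩ := Module.DirectLimit.exists_eq_of_of_eq hq
      rw [ktH_mk, ktH_mk, ktH_mk] at hv
      have hv' := (Submodule.Quotient.eq _).1 hv.symm
      rw [Submodule.mem_comap] at hv'
      refine ⟨v, z', huv, hz', ?_⟩
      have h3 := hv'.1
      have e : kt x (v - u) p (kt x (u - 0) p z') = kt x v p z' := by
        rw [kt_kt]; congr 2; omega
      rw [← e]
      exact h3
  · intro h q
    obtain ⟨u, q, rfl⟩ := Module.DirectLimit.exists_of q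
    induction q using Submodule.Quotient.induction_on with
    | H q =>
      obtain ⟨z, hz⟩ := q
      obtain ⟨v, z', huv, hz', hB⟩ := h u z hz
      refine ⟨Submodule.Quotient.mk ⟨z', hz'⟩, ?_⟩
      rw [klambda, LinearMap.comp_apply, castHk_mk,
        ← Module.DirectLimit.of_f (hij := Nat.zero_le v),
        ← Module.DirectLimit.of_f (i := u) (hij := huv), ktH_mk, ktH_mk]
      congr 1
      symm
      rw [Submodule.Quotient.eq, Submodule.mem_comap]
      refine ⟨hB, Submodule.sub_mem _ (kt_mem_kZ x huv p z hz) ?_⟩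
      have hzero : z' ∈ kZ (fun j => x j ^ (0 + 1)) M p := hx0 ▸ hz'
      exact kt_mem_kZ x (Nat.zero_le v) p _ hzero

/-! Comparison with the ambient complex. -/

variable {n N : ℕ} (φ : Fin n ↪o Fin N)

/-- Restriction of an ambient cochain along `φ`. -/
def resK (p : ℕ) (F : Finset (Fin N) → M) : KM M n p := fun t => F (t.1.map φ.toEmbedding)

/-- Extension by zero of a cochain along `φ`. -/
def extK (p : ℕ) (f : KM M n p) : Finset (Fin N) → M := fun s =>
  open Classical in
  if h : ∃ t : {t : Finset (Fin n) // t.card = p}, t.1.map φ.toEmbedding = s then f h.choose else 0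

theorem resK_extK (p : ℕ) (f : KM M n p) : resK φ p (extK φ p f) = f := by
  funext t
  have h : ∃ t' : {t : Finset (Fin n) // t.card = p},
    t'.1.map φ.toEmbedding = t.1.map φ.toEmbedding := ⟨t, rfl⟩
  have h2 : h.choose = t := Subtype.ext (Finset.map_injective _ h.choose_spec)
  rw [resK, extK, dif_pos h, h2]

/-- The image of `φ`. -/
def imS : Finset (Fin N) := Finset.univ.map φ.toEmbedding

theorem extK_supp (p : ℕ) (f : KM M n p) : HSupp (imS φ) p (extK φ p f) := by
  intro s hs
  by_cases h : ∃ t : {t : Finset (Fin n) // t.card = p}, t.1.map φ.toEmbedding = s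
  · obtain ⟨t, rfl⟩ := h
    exact ⟨Finset.map_subset_map.2 (Finset.subset_univ _), by rw [Finset.card_map, t.2]⟩
  · exact absurd (by rw [extK, dif_neg h]) hs

theorem eq_of_resK (p : ℕ) (F G : Finset (Fin N) → M) (hF : HSupp (imS φ) p F)
    (hG : HSupp (imS φ) p G) (h : resK φ p F = resK φ p G) : F = G := by
  funext s
  by_cases hs : s ⊆ imS φ ∧ s.card = p
  · obtain ⟨hs1, hs2⟩ := hs
    obtain ⟨t, -, rfl⟩ := Finset.subset_map_iff.1 hs1
    rw [Finset.card_map] at hs2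
    exact congrFun h ⟨t, hs2⟩
  · have h1 : F s = 0 := by by_contra h0; exact hs (hF s h0)
    have h2 : G s = 0 := by by_contra h0; exact hs (hG s h0)
    rw [h1, h2]

theorem resK_dOp (p : ℕ) (y : Fin N → R) (F : Finset (Fin N) → M) :
    resK φ (p + 1) (dOp (imS φ) y F) = kd (fun i => y (φ i)) p (resK φ p F) := by
  funext t
  obtain ⟨t, ht⟩ := t
  simp only [resK, dOp_apply, Finset.sum_apply, Pi.smul_apply, wOp_apply, imS, Finset.sum_map, kd,
    LinearMap.coe_mk, AddHom.coe_mk, Finset.mem_map']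
  rw [Finset.sum_attach t (fun j => ((-1 : R) ^ (t.filter (fun a => a < j)).card * y (φ j)) •
    F ((t.erase j).map φ.toEmbedding))]
  rw [← Finset.sum_subset (Finset.subset_univ t)]
  · refine Finset.sum_congr rfl fun j hj => ?_
    rw [if_pos hj, smul_smul, Finset.map_erase, mul_comm]
    congr 2
    rw [sg, Finset.filter_map, Finset.card_map]
    congr 3
    ext a
    simp
  · intro j _ hj
    rw [if_neg hj, smul_zero]

theorem resK_tOp (p e : ℕ) (x : Fin N → R) (F : Finset (Fin N) → M) :
    resK φ p (tOp x e F) = kt (fun i => x (φ i)) e p (resK φ p F) := by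
  funext t
  simp [resK, tOp_apply, kt, Finset.prod_map]

theorem resK_sub (p : ℕ) (F G : Finset (Fin N) → M) :
    resK φ p (F - G) = resK φ p F - resK φ p G := rfl

theorem hsupp_dOp {ι : Type} [LinearOrder ι] (S : Finset ι) (p : ℕ) (y : ι → R) (F : Finset ι → M)
    (hF : HSupp S p F) : HSupp S (p + 1) (dOp S y F) := by
  intro s hs
  rw [dOp_apply, Finset.sum_apply] at hs
  obtain ⟨k, hk, h3⟩ := Finset.exists_ne_zero_of_sum_ne_zero hs
  have hks : k ∈ s := by
    by_contra hks
    exact h3 (by rw [Pi.smul_apply, wOp_apply, if_neg hks, smul_zero])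
  have h4 : F (s.erase k) ≠ 0 := fun h0 => h3 (by
    rw [Pi.smul_apply, wOp_apply, if_pos hks, h0, smul_zero, smul_zero])
  obtain ⟨h5, h6⟩ := hF _ h4
  constructor
  · rw [← Finset.insert_erase hks]
    exact Finset.insert_subset hk h5
  · rw [← Finset.insert_erase hks, Finset.card_insert_of_notMem (Finset.notMem_erase _ _), h6]

theorem hsupp_tOp {ι : Type} [LinearOrder ι] (S : Finset ι) (p e : ℕ) (x : ι → R)
    (F : Finset ι → M) (hF : HSupp S p F) : HSupp S p (tOp x e F) := fun s hs =>
  hF s fun h0 => hs (by rw [tOp_apply, h0, smul_zero])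

theorem hsupp_sub {ι : Type} (S : Finset ι) (p : ℕ) (F G : Finset ι → M)
    [LinearOrder ι] (hF : HSupp S p F) (hG : HSupp S p G) : HSupp S p (F - G) := by
  intro s hs
  by_cases h : F s = 0
  · refine hG s fun h0 => hs ?_
    rw [Pi.sub_apply, h, h0, sub_zero]
  · exact hF s h

theorem hsupp_zero {ι : Type} (S : Finset ι) (p : ℕ) [LinearOrder ι] :
    HSupp S p (0 : Finset ι → M) := fun _ hs => absurd rfl hs

theorem lambdaSurj_iff_TS (p : ℕ) (x : Fin N → R) :
    LambdaSurj (fun i => x (φ i)) M p ↔ TS M x (imS φ) p := by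
  rw [lambdaSurj_iff]
  constructor
  · intro h u z hz hdz
    obtain ⟨v, z', huv, hz', hB⟩ := h u (resK φ p z) (by
      have := congrArg (resK φ (p + 1)) hdz
      rw [resK_dOp] at this
      exact this)
    have hs : HSupp (imS φ) p (tOp x (v - u) z - tOp x v (extK φ p z')) :=
      hsupp_sub _ _ _ _ (hsupp_tOp _ _ _ _ _ hz) (hsupp_tOp _ _ _ _ _ (extK_supp φ p z'))
    have hd' : dOp (imS φ) x (extK φ p z') = 0 := by
      refine eq_of_resK φ (p + 1) _ _ (hsupp_dOp _ _ _ _ (extK_supp φ p z')) (hsupp_zero _ _) ?_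
      rw [resK_dOp, resK_extK]
      exact hz'
    cases p with
    | zero =>
      refine ⟨v, extK φ 0 z', 0, huv, hd', ?_⟩
      rw [map_zero]
      refine eq_of_resK φ 0 _ _ hs (hsupp_zero _ _) ?_
      rw [resK_sub, resK_tOp, resK_tOp, resK_extK]
      exact hB
    | succ q =>
      obtain ⟨g, hg⟩ := hB
      refine ⟨v, extK φ (q + 1) z', extK φ q g, huv, hd', ?_⟩
      refine eq_of_resK φ (q + 1) _ _ hs (hsupp_dOp _ _ _ _ (extK_supp φ q g)) ?_
      rw [resK_sub, resK_tOp, resK_tOp, resK_extK, resK_dOp, resK_extK]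
      exact hg.symm
  · intro h u z hz
    obtain ⟨v, Z', G, huv, hZ', hG⟩ := h u (extK φ p z) (extK_supp φ p z) (by
      refine eq_of_resK φ (p + 1) _ _ (hsupp_dOp _ _ _ _ (extK_supp φ p z)) (hsupp_zero _ _) ?_
      rw [resK_dOp, resK_extK]
      exact hz)
    refine ⟨v, resK φ p Z', huv, ?_, ?_⟩
    · have := congrArg (resK φ (p + 1)) hZ'
      rw [resK_dOp] at this
      exact this
    · have := congrArg (resK φ p) hG
      rw [resK_sub, resK_tOp, resK_tOp, resK_extK] at this
      rw [this]
      cases p with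
      | zero =>
        change _ = (0 : KM M n 0)
        funext t
        obtain ⟨t, ht⟩ := t
        obtain rfl := Finset.card_eq_zero.1 ht
        simp [resK, dOp_apply, wOp_apply]
      | succ q =>
        rw [resK_dOp]
        exact ⟨_, rfl⟩

theorem imS_image (x : Fin N → R) :
    x '' (imS φ : Finset (Fin N)) = Set.range fun i => x (φ i) := by
  rw [imS, Finset.coe_map, Finset.coe_univ, Set.image_univ, ← Set.range_comp]
  rfl

/-- Surjectivity of `λ^p` does not depend on the chosen generators. -/
theorem lambdaSurj_indep {s t : ℕ} (a : Fin s → R) (b : Fin t → R)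
    (hab : Ideal.span (Set.range a) = Ideal.span (Set.range b)) (p : ℕ) :
    LambdaSurj a M p ↔ LambdaSurj b M p := by
  let x : Fin (s + t) → R := Fin.append a b
  let φ : Fin s ↪o Fin (s + t) := Fin.castAddOrderEmb t
  let ψ : Fin t ↪o Fin (s + t) := Fin.natAddOrderEmb s
  have hφ : (fun i => x (φ i)) = a := funext fun i => Fin.append_left a b i
  have hψ : (fun i => x (ψ i)) = b := funext fun i => Fin.append_right a b i
  have h1 := lambdaSurj_iff_TS (M := M) φ p x
  have h2 := lambdaSurj_iff_TS (M := M) ψ p x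
  rw [hφ] at h1
  rw [hψ] at h2
  have i1 := imS_image φ x
  have i2 := imS_image ψ x
  rw [hφ] at i1
  rw [hψ] at i2
  rw [h1, h2, ← TS_union x (imS φ) (imS ψ), ← TS_union x (imS ψ) (imS φ), Finset.union_comm]
  · intro j hj
    rw [i2, ← hab, ← i1]
    exact Ideal.subset_span ⟨j, hj, rfl⟩
  · intro j hj
    rw [i1, hab, ← i2]
    exact Ideal.subset_span ⟨j, hj, rfl⟩

end Translate

/-- **Theorem 4.2, (i) ⟺ (ii).** Suppose `c := cd(I,M) = ara(I,M) > 0`. Then the canonical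
map `λ^i_M : H^i(b₁,…,b_t; M) → H^i_I(M)` is surjective for all `0 ≤ i ≤ c-1` for every
generating set `{b₁,…,b_t}` of `I` if and only if there exists an f-generating set
`{a₁,…,a_s}` of `I` with respect to `M` for which `λ^i_M` is surjective for all
`0 ≤ i ≤ c-1`. -/
theorem theorem_4_2_i_ii [IsNoetherianRing R] (I : Ideal R)
    (M : Type) [AddCommGroup M] [Module R M] [Module.Finite R M]
    (c : ℕ) (hc : IsCd I M c) (ha : IsAra I M c) (hpos : 0 < c) :
    (∀ (t : ℕ) (b : Fin t → R), Ideal.span (Set.range b) = I →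
        ∀ i : ℕ, i < c → LambdaSurj b M i) ↔
      (∃ (s : ℕ) (a : Fin s → R), Ideal.span (Set.range a) = I ∧
        IsUncondFilterRegSeq I M a ∧ ∀ i : ℕ, i < c → LambdaSurj a M i) := by
  constructor
  · intro h
    obtain ⟨s, a, hspan, hreg⟩ := exists_fgenerating I M
    exact ⟨s, a, hspan, hreg, h s a hspan⟩
  · rintro ⟨s, a, hspan, -, h⟩ t b hb i hi
    exact (lambdaSurj_indep a b (hspan.trans hb.symm) i).1 (h i hi)
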